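/- Let H be a real Hilbert space, B : H → H a strongly positive self-adjoint bounded linear operator with constant γ̄ > 0, Q : H → H an α-contraction with α ∈ (0,1), γ a constant with 0 < γ < γ̄/α, and S : H → H nonexpansive with Fix(S) ≠ ∅. Let {αₙ} ⊂ (0,1) satisfy αₙ → 0, Σαₙ = ∞, and Σ|αₙ − αₙ₋₁| < ∞. Then the sequence generated by xₙ₊₁ = αₙγQ(xₙ) + (I − αₙB)S((xₙ + xₙ₊₁)/2) converges strongly to the unique z ∈ Fix(S) satisfying ⟨(B − γQ)z, x − z⟩ ≥ 0 for all x ∈ Fix(S). -/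

import Mathlib

/-!
The viscosity limit `z` is the fixed point of `P_F ∘ (I - t (B - γ Q))`, where `P_F` is the metric
projection onto the closed convex set `F = Fix S` and `t > 0` is small; this map is a contraction
because `γ α < γbar`.

The estimate on `I - t B` used throughout is elementary: expanding the square gives
`‖v - t B v‖² ≤ (1 - 2 t γbar + t² ‖B‖²) ‖v‖²`, so for any `β < γbar` and all small `t` one has
`‖v - t B v‖ ≤ (1 - t β) ‖v‖`. Taking `β` strictly between `γ α` and `γbar` leaves a positive gap
`β - γ α`, which drives every recursive inequality below.

The iterates are bounded, and Xu's lemma on recursions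
`v (n+1) ≤ (1 - c a n) v n + a n σ n + e n` with `σ → 0` and `∑ e < ∞` gives `x (n+1) - x n → 0`,
hence `x n - S (x n) → 0`. By the demiclosedness principle every weak cluster point of `x` lies in
`F`, so the variational inequality for `z` bounds `limsup ⟪γ Q z - B z, x n - z⟫` by `0`. A second
application of Xu's lemma, to `‖x n - z‖²`, finishes the proof. Weak cluster points are produced
as weak limits along ultrafilters, through the Riesz representation theorem.
-/

open scoped RealInnerProductSpace
open Filter Topology

/-- Xu's lemma on real recursive inequalities, with hypotheses needed only eventually. -/
lemma xu_lemma (v a σ e : ℕ → ℝ) (c : ℝ) (hc : 0 < c) (hv : ∀ n, 0 ≤ v n)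
    (ha : ∀ n, 0 ≤ a n) (ha0 : Tendsto a atTop (𝓝 0)) (hasum : ¬ Summable a)
    (hσ : Tendsto σ atTop (𝓝 0)) (he : ∀ n, 0 ≤ e n) (hes : Summable e)
    (h : ∀ᶠ n in atTop, v (n + 1) ≤ (1 - c * a n) * v n + a n * σ n + e n) :
    Tendsto v atTop (𝓝 0) := by
  have key : ∀ ε > 0, ∀ᶠ n in atTop, v n < 3 * ε := by
    intro ε hε
    have h1 : ∀ᶠ n in atTop, c * a n ≤ 1 := by
      have : Tendsto (fun n => c * a n) atTop (𝓝 (c * 0)) := ha0.const_mul c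
      rw [mul_zero] at this
      exact this.eventually (ge_mem_nhds one_pos)
    have h2 : ∀ᶠ n in atTop, σ n ≤ c * ε := hσ.eventually (ge_mem_nhds (by positivity))
    have h3 : ∀ᶠ n in atTop, ∑' k, e (k + n) < ε :=
      (tendsto_sum_nat_add e).eventually (gt_mem_nhds hε)
    obtain ⟨m, hm⟩ := eventually_atTop.1 (h.and (h1.and h2))
    obtain ⟨m', hm'⟩ := eventually_atTop.1 h3
    set N := max m m' with hN
    have htail : ∀ k, ∑ i ∈ Finset.range k, e (i + N) < ε := fun k =>
      lt_of_le_of_lt (((summable_nat_add_iff N).2 hes).sum_le_tsum _ (fun i _ => he _))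
        (hm' N (le_max_right _ _))
    have hind : ∀ k, v (k + N) ≤ Real.exp (-(c * ∑ i ∈ Finset.range k, a (i + N))) * v N + ε
        + ∑ i ∈ Finset.range k, e (i + N) := by
      intro k
      induction k with
      | zero => simp; linarith
      | succ k ih =>
        obtain ⟨r1, r2, r3⟩ := hm (k + N) (le_trans (le_max_left _ _) (Nat.le_add_left _ _))
        rw [Finset.sum_range_succ, Finset.sum_range_succ]
        have e1 : k + 1 + N = k + N + 1 := by omega
        rw [e1]
        set A := ∑ i ∈ Finset.range k, a (i + N)
        set E := ∑ i ∈ Finset.range k, e (i + N) with hE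
        have hE0 : 0 ≤ E := Finset.sum_nonneg (fun i _ => he _)
        have hexp : Real.exp (-(c * (A + a (k + N))))
            = Real.exp (-(c * A)) * Real.exp (-(c * a (k + N))) := by
          rw [← Real.exp_add]; ring_nf
        have hle : 1 - c * a (k + N) ≤ Real.exp (-(c * a (k + N))) := by
          have := Real.add_one_le_exp (-(c * a (k + N))); linarith
        rw [hexp]
        have hpos : 0 ≤ Real.exp (-(c * A)) * v N := mul_nonneg (Real.exp_pos _).le (hv _)
        have s1 := mul_le_mul_of_nonneg_left ih (sub_nonneg.2 r2)
        have s2 := mul_le_mul_of_nonneg_right hle hpos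
        have s3 := mul_le_mul_of_nonneg_left r3 (ha (k + N))
        have s4 : 0 ≤ c * a (k + N) * E := mul_nonneg (mul_nonneg hc.le (ha _)) hE0
        nlinarith
    have hdiv : Tendsto (fun k => ∑ i ∈ Finset.range k, a (i + N)) atTop atTop :=
      (not_summable_iff_tendsto_nat_atTop_of_nonneg (fun n => ha (n + N))).1
        (fun hs => hasum ((summable_nat_add_iff N).1 hs))
    have hlim : Tendsto (fun k => Real.exp (-(c * ∑ i ∈ Finset.range k, a (i + N))) * v N)
        atTop (𝓝 0) := by
      have h5 := Real.tendsto_exp_neg_atTop_nhds_zero.comp (hdiv.const_mul_atTop hc)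
      simpa using h5.mul_const (v N)
    obtain ⟨k0, hk0⟩ := eventually_atTop.1 (hlim.eventually (gt_mem_nhds hε))
    filter_upwards [eventually_ge_atTop (k0 + N)] with n hn
    obtain ⟨k, rfl⟩ : ∃ k, n = k + N := ⟨n - N, by omega⟩
    have := hind k
    have := htail k
    have := hk0 k (by omega)
    linarith
  rw [tendsto_order]
  refine ⟨fun b hb => Eventually.of_forall fun n => lt_of_lt_of_le hb (hv n), fun b hb => ?_⟩
  filter_upwards [key (b / 3) (by positivity)] with n hn
  linarith

section Hilbert

variable {H : Type*} [NormedAddCommGroup H] [InnerProductSpace ℝ H]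

/-- For a strongly positive operator, `I - t B` shrinks norms by `1 - t β` for small `t`, at the
cost of lowering the positivity constant from `γbar` to `β`. -/
lemma shrink_of_strongly_positive (B : H →L[ℝ] H) (γbar κ : ℝ) (hκ : 0 < κ) (hκγ : κ < γbar)
    (hBpos : ∀ x : H, ⟪B x, x⟫ ≥ γbar * ‖x‖ ^ 2) :
    ∃ β > κ, ∃ t₀ > 0, ∀ t, 0 ≤ t → t ≤ t₀ →
      t * β ≤ 1 ∧ ∀ v : H, ‖v - t • B v‖ ≤ (1 - t * β) * ‖v‖ := by
  have hβ : 0 < (κ + γbar) / 2 := by linarith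
  refine ⟨(κ + γbar) / 2, by linarith,
    min (1 / ((κ + γbar) / 2)) ((γbar - κ) / (‖B‖ ^ 2 + 1)), ?_, ?_⟩
  · have : 0 < γbar - κ := by linarith
    positivity
  intro t ht0 ht
  have h1 : t * ((κ + γbar) / 2) ≤ 1 := (le_div_iff₀ hβ).1 (ht.trans (min_le_left _ _))
  have h2 : t * (‖B‖ ^ 2 + 1) ≤ γbar - κ :=
    (le_div_iff₀ (by positivity)).1 (ht.trans (min_le_right _ _))
  refine ⟨h1, fun v => ?_⟩
  apply le_of_sq_le_sq _ (mul_nonneg (by linarith) (norm_nonneg v))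
  rw [norm_sub_sq_real, inner_smul_right, norm_smul, Real.norm_of_nonneg ht0, real_inner_comm]
  have h3 := mul_le_mul_of_nonneg_left (hBpos v) ht0
  have h4 : ‖B v‖ ^ 2 ≤ ‖B‖ ^ 2 * ‖v‖ ^ 2 := by
    rw [← mul_pow]; exact pow_le_pow_left₀ (norm_nonneg _) (B.le_opNorm v) 2
  have h5 := mul_le_mul_of_nonneg_left h4 (sq_nonneg t)
  have h6 := mul_le_mul_of_nonneg_right h2 (mul_nonneg ht0 (sq_nonneg ‖v‖))
  have h7 : 0 ≤ (t * ((κ + γbar) / 2) * ‖v‖) ^ 2 := sq_nonneg _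
  have h8 : 0 ≤ t ^ 2 * ‖v‖ ^ 2 := by positivity
  nlinarith

lemma convex_fixedPoints_of_nonexpansive (S : H → H) (hS : ∀ x y : H, ‖S x - S y‖ ≤ ‖x - y‖) :
    Convex ℝ {p | S p = p} := by
  intro p hp q hq s t hs ht hst
  simp only [Set.mem_ofPred_eq] at *
  set m := s • p + t • q with hm
  set u := S m
  obtain rfl : s = 1 - t := by linarith
  have e1 : m - p = t • (q - p) := by rw [hm]; module
  have e2 : m - q = -((1 - t) • (q - p)) := by rw [hm]; module
  have i1 : ‖u - p‖ ≤ t * ‖q - p‖ := by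
    have := hS m p
    rwa [hp, e1, norm_smul, Real.norm_of_nonneg ht] at this
  have i2 : ‖u - q‖ ≤ (1 - t) * ‖q - p‖ := by
    have := hS m q
    rwa [hq, e2, norm_neg, norm_smul, Real.norm_of_nonneg hs] at this
  have e3 : u - m = (u - p) - t • (q - p) := by rw [hm]; module
  have e4 : u - q = (u - p) - (q - p) := by abel
  have n3 : ‖u - m‖ ^ 2 = ‖u - p‖ ^ 2 - 2 * (t * ⟪u - p, q - p⟫) + (t * ‖q - p‖) ^ 2 := by
    rw [e3, norm_sub_sq_real, inner_smul_right, norm_smul, Real.norm_of_nonneg ht]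
  have n4 : ‖u - q‖ ^ 2 = ‖u - p‖ ^ 2 - 2 * ⟪u - p, q - p⟫ + ‖q - p‖ ^ 2 := by
    rw [e4, norm_sub_sq_real]
  have j1 := mul_le_mul_of_nonneg_left (pow_le_pow_left₀ (norm_nonneg _) i1 2) hs
  have j2 := mul_le_mul_of_nonneg_left (pow_le_pow_left₀ (norm_nonneg _) i2 2) ht
  have : ‖u - m‖ ^ 2 ≤ 0 := by nlinarith
  have : ‖u - m‖ = 0 := by
    have := sq_nonneg ‖u - m‖
    exact pow_eq_zero_iff two_ne_zero |>.1 (by linarith)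
  exact sub_eq_zero.1 (norm_eq_zero.1 this)

/-- A variational inequality over a nonempty closed convex set is solvable for `G` as soon as some
forward step `I - t G` is a strict contraction. -/
lemma exists_variational_solution [CompleteSpace H] (F : Set H) (hne : F.Nonempty)
    (hcl : IsClosed F) (hconv : Convex ℝ F) (G : H → H) (t k : ℝ) (ht : 0 < t) (hk0 : 0 ≤ k)
    (hk1 : k < 1) (hG : ∀ x y, ‖(x - t • G x) - (y - t • G y)‖ ≤ k * ‖x - y‖) :
    ∃ z ∈ F, ∀ w ∈ F, ⟪G z, w - z⟫ ≥ 0 := by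
  have hproj : ∀ u : H, ∃ v ∈ F, ∀ w ∈ F, ⟪u - v, w - v⟫ ≤ 0 := by
    intro u
    obtain ⟨v, hv, hmin⟩ := exists_norm_eq_iInf_of_complete_convex hne hcl.isComplete hconv u
    exact ⟨v, hv, (norm_eq_iInf_iff_real_inner_le_zero hconv hv).1 hmin⟩
  choose P hPF hP using hproj
  have hPne : ∀ u v, ‖P u - P v‖ ≤ ‖u - v‖ := by
    intro u v
    have h1 := hP u (P v) (hPF v)
    have h2 := hP v (P u) (hPF u)
    have h3 : ⟪u - P u, P v - P u⟫ + ⟪v - P v, P u - P v⟫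
        = ‖P u - P v‖ ^ 2 - ⟪u - v, P u - P v⟫ := by
      rw [← real_inner_self_eq_norm_sq]
      simp only [inner_sub_left, inner_sub_right]
      ring
    have h4 := real_inner_le_norm (u - v) (P u - P v)
    by_contra! hlt
    nlinarith [norm_nonneg (u - v), norm_nonneg (P u - P v)]
  have hcon : ContractingWith ⟨k, hk0⟩ (fun x => P (x - t • G x)) := by
    refine ⟨hk1, LipschitzWith.of_dist_le_mul fun x y => ?_⟩
    rw [dist_eq_norm, dist_eq_norm]
    exact (hPne _ _).trans (hG x y)
  have hz : P (hcon.fixedPoint - t • G hcon.fixedPoint) = hcon.fixedPoint :=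
    hcon.fixedPoint_isFixedPt
  set z := hcon.fixedPoint
  refine ⟨z, hz ▸ hPF _, fun w hw => ?_⟩
  have h := hP (z - t • G z) w hw
  rw [hz, sub_sub_cancel_left, inner_neg_left, real_inner_smul_left] at h
  by_contra! hneg
  nlinarith

/-- A bounded sequence in a Hilbert space has a weak limit along every ultrafilter. -/
lemma exists_weak_limit [CompleteSpace H] {ι : Type*} (U : Ultrafilter ι) (u : ι → H) (K : ℝ)
    (hu : ∀ᶠ n in (U : Filter ι), ‖u n‖ ≤ K) :
    ∃ p : H, ∀ y : H, Tendsto (fun n => ⟪u n, y⟫) U (𝓝 ⟪p, y⟫) := by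
  have hbd : ∀ y : H, ∀ᶠ n in (U : Filter ι), ⟪u n, y⟫ ∈ Set.Icc (-(K * ‖y‖)) (K * ‖y‖) := by
    intro y
    filter_upwards [hu] with n hn
    rw [Set.mem_Icc, ← abs_le]
    exact (abs_real_inner_le_norm _ _).trans (mul_le_mul_of_nonneg_right hn (norm_nonneg _))
  have hex : ∀ y : H, ∃ l ∈ Set.Icc (-(K * ‖y‖)) (K * ‖y‖),
      Tendsto (fun n => ⟪u n, y⟫) U (𝓝 l) := by
    intro y
    obtain ⟨l, hl, hle⟩ := isCompact_Icc.ultrafilter_le_nhds (U.map fun n => ⟪u n, y⟫)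
      (le_principal_iff.2 (hbd y))
    exact ⟨l, hl, hle⟩
  choose φ hφ hlim using hex
  let L : H →ₗ[ℝ] ℝ :=
    { toFun := φ
      map_add' := fun y y' => tendsto_nhds_unique (hlim (y + y'))
        (by simpa only [inner_add_right] using (hlim y).add (hlim y'))
      map_smul' := fun r y => tendsto_nhds_unique (hlim (r • y))
        (by simpa only [inner_smul_right, RingHom.id_apply, smul_eq_mul] using (hlim y).const_mul r) }
  let L' : H →L[ℝ] ℝ := L.mkContinuous K (fun y => abs_le.2 (hφ y))
  refine ⟨(InnerProductSpace.toDual ℝ H).symm L', fun y => ?_⟩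
  rw [InnerProductSpace.toDual_symm_apply]
  exact hlim y

/-- Demiclosedness of `I - S` at `0`, for weak limits along an arbitrary nontrivial filter. -/
lemma demiclosed {ι : Type*} (l : Filter ι) [l.NeBot] (S : H → H)
    (hS : ∀ x y : H, ‖S x - S y‖ ≤ ‖x - y‖) (u : ι → H) (K : ℝ) (p : H)
    (hu : ∀ᶠ n in l, ‖u n‖ ≤ K) (hp : ∀ y : H, Tendsto (fun n => ⟪u n, y⟫) l (𝓝 ⟪p, y⟫))
    (hreg : Tendsto (fun n => ‖u n - S (u n)‖) l (𝓝 0)) : S p = p := by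
  have hin : Tendsto (fun n => ⟪u n - p, p - S p⟫) l (𝓝 0) := by
    have := (hp (p - S p)).sub_const ⟪p, p - S p⟫
    simpa only [inner_sub_left, sub_self] using this
  have hR : Tendsto (fun n => ‖u n - S (u n)‖ ^ 2 + 2 * ‖u n - S (u n)‖ * (K + ‖p‖)
      - 2 * ⟪u n - p, p - S p⟫) l (𝓝 (0 ^ 2 + 2 * 0 * (K + ‖p‖) - 2 * 0)) :=
    ((hreg.pow 2).add ((hreg.const_mul 2).mul_const _)).sub (hin.const_mul 2)
  have hle : ‖p - S p‖ ^ 2 ≤ 0 ^ 2 + 2 * 0 * (K + ‖p‖) - 2 * 0 := by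
    refine ge_of_tendsto hR ?_
    filter_upwards [hu] with n hn
    have e1 : u n - S p = (u n - p) + (p - S p) := by abel
    have n1 := norm_add_sq_real (u n - p) (p - S p)
    rw [← e1] at n1
    have t1 : ‖u n - S p‖ ≤ ‖u n - S (u n)‖ + ‖u n - p‖ :=
      (norm_sub_le_norm_sub_add_norm_sub _ (S (u n)) _).trans (by gcongr; exact hS _ _)
    have t2 : ‖u n - p‖ ≤ K + ‖p‖ := (norm_sub_le _ _).trans (by gcongr)
    have t3 := pow_le_pow_left₀ (norm_nonneg _) t1 2
    have t4 := mul_le_mul_of_nonneg_left t2 (norm_nonneg (u n - S (u n)))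
    nlinarith
  have : ‖p - S p‖ = 0 := by
    have := sq_nonneg ‖p - S p‖
    exact pow_eq_zero_iff two_ne_zero |>.1 (by linarith)
  exact (sub_eq_zero.1 (norm_eq_zero.1 this)).symm

/-- If `g` is normal to `Fix S` at `z`, every bounded asymptotically regular sequence `u` has
`limsup ⟪g, u n - z⟫ ≤ 0`, stated as convergence of the positive parts. Otherwise a weak limit of
`u` along an ultrafilter would be a fixed point of `S` violating normality. -/
lemma tendsto_max_inner [CompleteSpace H] (S : H → H) (hS : ∀ x y : H, ‖S x - S y‖ ≤ ‖x - y‖)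
    (u : ℕ → H) (K : ℝ) (hu : ∀ᶠ n in atTop, ‖u n‖ ≤ K)
    (hreg : Tendsto (fun n => ‖u n - S (u n)‖) atTop (𝓝 0)) (g z : H)
    (hz : ∀ w, S w = w → ⟪g, w - z⟫ ≤ 0) :
    Tendsto (fun n => max ⟪g, u n - z⟫ 0) atTop (𝓝 0) := by
  rw [tendsto_order]
  refine ⟨fun b hb => Eventually.of_forall fun n => lt_of_lt_of_le hb (le_max_right _ _),
    fun b hb => ?_⟩
  by_contra hcon
  have hfr : ∃ᶠ n in atTop, b ≤ ⟪g, u n - z⟫ := by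
    refine (not_eventually.1 hcon).mono fun n hn => ?_
    rcases le_max_iff.1 (not_lt.1 hn) with h | h
    · exact h
    · linarith
  have : (atTop ⊓ 𝓟 {n | b ≤ ⟪g, u n - z⟫} : Filter ℕ).NeBot := frequently_iff_neBot.1 hfr
  set U := Ultrafilter.of (atTop ⊓ 𝓟 {n | b ≤ ⟪g, u n - z⟫} : Filter ℕ)
  have hU : (U : Filter ℕ) ≤ atTop ⊓ 𝓟 {n | b ≤ ⟪g, u n - z⟫} := Ultrafilter.of_le _
  have hU1 := hU.trans inf_le_left
  obtain ⟨p, hp⟩ := exists_weak_limit U u K (hU1 hu)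
  have hpfix := demiclosed (U : Filter ℕ) S hS u K p (hU1 hu) hp (hreg.mono_left hU1)
  have hlim : Tendsto (fun n => ⟪g, u n - z⟫) U (𝓝 ⟪g, p - z⟫) := by
    have := (hp g).sub_const ⟪z, g⟫
    simpa only [inner_sub_right, real_inner_comm] using this
  have hge : b ≤ ⟪g, p - z⟫ :=
    ge_of_tendsto hlim (le_principal_iff.1 (hU.trans inf_le_right))
  have := hz p hpfix
  linarith

/-- Dividing a recursive inequality by `1 + θ`, where `0 ≤ θ ≤ D`: the contraction gain `m` is
divided by at most `1 + D`, and the remainder `r ≥ 0` only decreases. -/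
lemma div_step {v v' θ m D r : ℝ} (hθ : 0 ≤ θ) (hθD : θ ≤ D) (hm : 0 ≤ m) (hv : 0 ≤ v)
    (hr : 0 ≤ r) (h : (1 + θ) * v' ≤ (1 + θ - m) * v + r) :
    v' ≤ (1 - m / (1 + D)) * v + r := by
  have hD : 0 < 1 + D := by linarith
  have h1 : m * (1 + θ) / (1 + D) ≤ m := by
    rw [div_le_iff₀ hD]; nlinarith
  have h2 : (1 + θ) * v' ≤ (1 + θ) * ((1 - m / (1 + D)) * v + r) := by
    have e : (1 + θ) * ((1 - m / (1 + D)) * v + r)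
        = (1 + θ - m * (1 + θ) / (1 + D)) * v + (1 + θ) * r := by field_simp
    rw [e]; nlinarith
  exact le_of_mul_le_mul_left h2 (by linarith)

end Hilbert


theorem stmt_12 {H : Type*} [NormedAddCommGroup H] [InnerProductSpace ℝ H] [CompleteSpace H]
    (B : H →L[ℝ] H) (hBsa : IsSelfAdjoint B)
    (γbar : ℝ) (hγbar : 0 < γbar)
    (hBpos : ∀ x : H, ⟪B x, x⟫ ≥ γbar * ‖x‖ ^ 2)
    (Q : H → H) (α : ℝ) (hα0 : 0 < α) (hα1 : α < 1)
    (hQ : ∀ x y : H, ‖Q x - Q y‖ ≤ α * ‖x - y‖)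
    (γ : ℝ) (hγ0 : 0 < γ) (hγ : γ < γbar / α)
    (S : H → H) (hS : ∀ x y : H, ‖S x - S y‖ ≤ ‖x - y‖)
    (hfix : ∃ p : H, S p = p)
    (a : ℕ → ℝ) (ha : ∀ n, a n ∈ Set.Ioo (0 : ℝ) 1)
    (ha0 : Filter.Tendsto a Filter.atTop (nhds 0))
    (hasum : ¬ Summable a)
    (hadiff : Summable (fun n => |a (n + 1) - a n|))
    (x : ℕ → H)
    (hrec : ∀ n, x (n + 1)
      = a n • (γ • Q (x n)) + ((1 : H →L[ℝ] H) - a n • B) (S ((2 : ℝ)⁻¹ • (x n + x (n + 1))))) :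
    ∃ z : H, (S z = z ∧ ∀ w : H, S w = w → ⟪B z - γ • Q z, w - z⟫ ≥ 0)
      ∧ Filter.Tendsto x Filter.atTop (nhds z)
      ∧ ∀ z' : H, (S z' = z' ∧ ∀ w : H, S w = w → ⟪B z' - γ • Q z', w - z'⟫ ≥ 0) → z' = z := by
  have hκ : 0 < γ * α := mul_pos hγ0 hα0
  have hκγ : γ * α < γbar := (lt_div_iff₀ hα0).1 hγ
  set κ := γ * α with hκdef
  obtain ⟨β, hβκ, t₀, ht₀, hsh⟩ := shrink_of_strongly_positive B γbar κ hκ hκγ hBpos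
  have hδ : 0 < β - κ := by linarith
  have hβ : 0 < β := by linarith
  have hQγ : ∀ u v : H, ‖γ • Q u - γ • Q v‖ ≤ κ * ‖u - v‖ := by
    intro u v
    rw [← smul_sub, norm_smul, Real.norm_of_nonneg hγ0.le, hκdef, mul_assoc]
    exact mul_le_mul_of_nonneg_left (hQ u v) hγ0.le
  obtain ⟨z, hzF, hz⟩ : ∃ z ∈ {p | S p = p}, ∀ w ∈ {p | S p = p},
      ⟪B z - γ • Q z, w - z⟫ ≥ 0 := by
    have hScont : Continuous S :=
      (LipschitzWith.of_dist_le_mul (K := 1) fun x y => by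
        simpa [dist_eq_norm] using hS x y).continuous
    obtain ⟨h1, h2⟩ := hsh t₀ ht₀.le le_rfl
    have htδ := mul_pos ht₀ hδ
    refine exists_variational_solution _ hfix (isClosed_eq hScont continuous_id)
      (convex_fixedPoints_of_nonexpansive S hS) (fun x => B x - γ • Q x) t₀
      (1 - t₀ * (β - κ)) ht₀ (by nlinarith) (by linarith) fun u v => ?_
    have e : (u - t₀ • (B u - γ • Q u)) - (v - t₀ • (B v - γ • Q v))
        = ((u - v) - t₀ • B (u - v)) + t₀ • (γ • Q u - γ • Q v) := by
      rw [map_sub]; module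
    rw [e]
    have n1 := norm_add_le ((u - v) - t₀ • B (u - v)) (t₀ • (γ • Q u - γ • Q v))
    have n2 := h2 (u - v)
    have n3 := mul_le_mul_of_nonneg_left (hQγ u v) ht₀.le
    rw [norm_smul t₀, Real.norm_of_nonneg ht₀.le] at n1
    linarith
  have hzF' : S z = z := hzF
  refine ⟨z, ⟨hzF, hz⟩, ?_, ?_⟩
  swap
  · rintro z' ⟨hz'F, hz'⟩
    have h1 := hz z' hz'F
    have h2 := hz' z hzF
    have h3 := hBpos (z' - z)
    have h4 := (real_inner_le_norm (γ • Q z' - γ • Q z) (z' - z)).trans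
      (mul_le_mul_of_nonneg_right (hQγ z' z) (norm_nonneg _))
    have h5 : ⟪B (z' - z), z' - z⟫ - ⟪γ • Q z' - γ • Q z, z' - z⟫
        = -⟪B z - γ • Q z, z' - z⟫ - ⟪B z' - γ • Q z', z - z'⟫ := by
      rw [map_sub]
      simp only [inner_sub_left, inner_sub_right]
      ring
    by_contra hne
    have h6 : 0 < ‖z' - z‖ := norm_pos_iff.2 (sub_ne_zero.2 hne)
    nlinarith [mul_pos (sub_pos.2 hκγ) (mul_pos h6 h6)]
  have hapos : ∀ n, 0 ≤ a n := fun n => (ha n).1.le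
  have hale : ∀ n, a n ≤ 1 := fun n => (ha n).2.le
  obtain ⟨N, hN⟩ := eventually_atTop.1 (ha0.eventually (ge_mem_nhds ht₀))
  have hshr : ∀ n, N ≤ n → a n * β ≤ 1 ∧ ∀ v : H, ‖v - a n • B v‖ ≤ (1 - a n * β) * ‖v‖ :=
    fun n hn => hsh (a n) (hapos n) (hN n hn)
  set y : ℕ → H := fun n => (2 : ℝ)⁻¹ • (x n + x (n + 1)) with hy
  have hrec' : ∀ n, x (n + 1) = a n • (γ • Q (x n)) + (S (y n) - a n • B (S (y n))) :=
    fun n => hrec n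
  have hyz : ∀ n, ‖y n - z‖ ≤ (‖x n - z‖ + ‖x (n + 1) - z‖) / 2 := by
    intro n
    have e : y n - z = (2 : ℝ)⁻¹ • ((x n - z) + (x (n + 1) - z)) := by
      simp only [hy]; module
    rw [e, norm_smul, Real.norm_of_nonneg (by norm_num)]
    linarith [norm_add_le (x n - z) (x (n + 1) - z)]
  have hSyz : ∀ n, ‖S (y n) - z‖ ≤ (‖x n - z‖ + ‖x (n + 1) - z‖) / 2 := by
    intro n
    have := hS (y n) z
    rw [hzF'] at this
    exact this.trans (hyz n)
  have hsplit : ∀ n, x (n + 1) - z = a n • (γ • Q (x n) - γ • Q z) + a n • (γ • Q z - B z)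
      + ((S (y n) - z) - a n • B (S (y n) - z)) := by
    intro n
    rw [map_sub, hrec' n]
    module
  obtain ⟨K, hK0, hK⟩ : ∃ K, 0 ≤ K ∧ ∀ n, N ≤ n → ‖x n - z‖ ≤ K := by
    refine ⟨max ‖x N - z‖ (‖γ • Q z - B z‖ / (β - κ)),
      (norm_nonneg _).trans (le_max_left _ _), fun n hn => ?_⟩
    have hC := (div_le_iff₀ hδ).1 (le_max_right ‖x N - z‖ (‖γ • Q z - B z‖ / (β - κ)))
    induction n, hn using Nat.le_induction with
    | base => exact le_max_left _ _
    | succ n hn ih =>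
      set K := max ‖x N - z‖ (‖γ • Q z - B z‖ / (β - κ))
      obtain ⟨s1, s2⟩ := hshr n hn
      have n0 : ‖x (n + 1) - z‖ ≤ a n * ‖γ • Q (x n) - γ • Q z‖ + a n * ‖γ • Q z - B z‖
          + ‖(S (y n) - z) - a n • B (S (y n) - z)‖ := by
        conv_lhs => rw [hsplit n]
        refine (norm_add₃_le).trans_eq ?_
        rw [norm_smul, norm_smul, Real.norm_of_nonneg (hapos n)]
      have n1 := mul_le_mul_of_nonneg_left (hQγ (x n) z) (hapos n)
      have n2 := (s2 (S (y n) - z)).trans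
        (mul_le_mul_of_nonneg_left (hSyz n) (sub_nonneg.2 s1))
      have n3 := mul_le_mul_of_nonneg_left hC (hapos n)
      have n4 := mul_le_mul_of_nonneg_left ih (sub_nonneg.2 s1)
      have n5 := mul_le_mul_of_nonneg_left ih (mul_nonneg (hapos n) hκ.le)
      have n6 : 0 < 1 + a n * β := by have := mul_nonneg (hapos n) hβ.le; linarith
      refine le_of_mul_le_mul_left ?_ n6
      linarith
  have hKS : ∀ n, N ≤ n → ‖S (y n) - z‖ ≤ K := by
    intro n hn
    linarith [hSyz n, hK n hn, hK (n + 1) (by omega)]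
  -- `x (n + 1) - S (y n)` equals `a n` times the vector bounded here
  obtain ⟨M, hM0, hM⟩ : ∃ M, 0 ≤ M ∧ ∀ n, N ≤ n → ‖γ • Q (x n) - B (S (y n))‖ ≤ M := by
    refine ⟨κ * K + ‖γ • Q z - B z‖ + ‖B‖ * K, by positivity, fun n hn => ?_⟩
    have e : γ • Q (x n) - B (S (y n))
        = (γ • Q (x n) - γ • Q z) + (γ • Q z - B z) + -B (S (y n) - z) := by
      rw [map_sub]; abel
    rw [e]
    refine norm_add₃_le.trans ?_
    rw [norm_neg]
    have n1 := (hQγ (x n) z).trans (mul_le_mul_of_nonneg_left (hK n hn) hκ.le)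
    have n2 := (B.le_opNorm (S (y n) - z)).trans
      (mul_le_mul_of_nonneg_left (hKS n hn) (norm_nonneg B))
    linarith
  have hd : Tendsto (fun n => ‖x (n + 1) - x n‖) atTop (𝓝 0) := by
    refine xu_lemma _ (fun n => a (n + 1)) (fun _ => 0) (fun n => 2 * M * |a (n + 1) - a n|)
      (2 * (β - κ) / (1 + β)) (by positivity) (fun _ => norm_nonneg _) (fun n => hapos _)
      ((tendsto_add_atTop_iff_nat 1).2 ha0) (fun h => hasum ((summable_nat_add_iff 1).1 h))
      tendsto_const_nhds (fun n => by positivity) (hadiff.mul_left _) ?_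
    filter_upwards [eventually_ge_atTop N] with n hn
    obtain ⟨s1, s2⟩ := hshr (n + 1) (by omega)
    have e : x (n + 1 + 1) - x (n + 1) = a (n + 1) • (γ • Q (x (n + 1)) - γ • Q (x n))
        + (a (n + 1) - a n) • (γ • Q (x n) - B (S (y n)))
        + ((S (y (n + 1)) - S (y n)) - a (n + 1) • B (S (y (n + 1)) - S (y n))) := by
      refine (congrArg₂ (· - ·) (hrec' (n + 1)) (hrec' n)).trans ?_
      rw [map_sub]
      module
    have n0 : ‖x (n + 1 + 1) - x (n + 1)‖ ≤ a (n + 1) * ‖γ • Q (x (n + 1)) - γ • Q (x n)‖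
        + |a (n + 1) - a n| * ‖γ • Q (x n) - B (S (y n))‖
        + ‖(S (y (n + 1)) - S (y n)) - a (n + 1) • B (S (y (n + 1)) - S (y n))‖ := by
      conv_lhs => rw [e]
      refine (norm_add₃_le).trans_eq ?_
      rw [norm_smul, norm_smul, Real.norm_of_nonneg (hapos _), Real.norm_eq_abs]
    have ny : ‖y (n + 1) - y n‖ ≤ (‖x (n + 1) - x n‖ + ‖x (n + 1 + 1) - x (n + 1)‖) / 2 := by
      have e : y (n + 1) - y n
          = (2 : ℝ)⁻¹ • ((x (n + 1) - x n) + (x (n + 1 + 1) - x (n + 1))) := by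
        simp only [hy]; module
      rw [e, norm_smul, Real.norm_of_nonneg (by norm_num)]
      linarith [norm_add_le (x (n + 1) - x n) (x (n + 1 + 1) - x (n + 1))]
    have n1 := mul_le_mul_of_nonneg_left (hQγ (x (n + 1)) (x n)) (hapos (n + 1))
    have n2 := (s2 (S (y (n + 1)) - S (y n))).trans
        (mul_le_mul_of_nonneg_left ((hS _ _).trans ny) (sub_nonneg.2 s1))
    have n3 := mul_le_mul_of_nonneg_left (hM n hn) (abs_nonneg (a (n + 1) - a n))
    have hb := mul_nonneg (hapos (n + 1)) hβ.le
    have key := div_step (v := ‖x (n + 1) - x n‖) (v' := ‖x (n + 1 + 1) - x (n + 1)‖)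
      (θ := a (n + 1) * β) (m := 2 * a (n + 1) * (β - κ)) (D := β)
      (r := 2 * M * |a (n + 1) - a n|) hb
      (by nlinarith [hale (n + 1)]) (mul_nonneg (by linarith [hapos (n + 1)]) hδ.le)
      (norm_nonneg _) (by positivity) (by linarith)
    refine key.trans_eq ?_
    ring
  have hreg : Tendsto (fun n => ‖x n - S (x n)‖) atTop (𝓝 0) := by
    have hb : Tendsto (fun n => 2 * ‖x (n + 1) - x n‖ + a n * M) atTop (𝓝 0) := by
      simpa using (hd.const_mul 2).add (ha0.mul_const M)
    refine squeeze_zero' (Eventually.of_forall fun n => norm_nonneg _) ?_ hb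
    filter_upwards [eventually_ge_atTop N] with n hn
    have e1 : x n - S (x n) = (x n - x (n + 1)) + (x (n + 1) - S (y n)) + (S (y n) - S (x n)) := by
      abel
    have e2 : x (n + 1) - S (y n) = a n • (γ • Q (x n) - B (S (y n))) := by
      rw [hrec' n]; module
    have e3 : y n - x n = (2 : ℝ)⁻¹ • (x (n + 1) - x n) := by
      simp only [hy]; module
    have n1 := hS (y n) (x n)
    rw [e3, norm_smul, Real.norm_of_nonneg (by norm_num)] at n1
    have n2 := mul_le_mul_of_nonneg_left (hM n hn) (hapos n)
    rw [e1, e2]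
    refine norm_add₃_le.trans ?_
    rw [norm_smul, Real.norm_of_nonneg (hapos n), norm_sub_rev (x n)]
    linarith [norm_nonneg (x (n + 1) - x n)]
  have hlimsup : Tendsto (fun n => max ⟪γ • Q z - B z, x n - z⟫ 0) atTop (𝓝 0) := by
    refine tendsto_max_inner S hS x (K + ‖z‖) ?_ hreg _ z fun w hw => ?_
    · filter_upwards [eventually_ge_atTop N] with n hn
      have := norm_le_norm_sub_add (x n) z
      linarith [hK n hn]
    · have := hz w hw
      rw [← neg_sub, inner_neg_left]
      linarith
  have hsq : Tendsto (fun n => ‖x n - z‖ ^ 2) atTop (𝓝 0) := by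
    refine xu_lemma _ a (fun n => 4 * max ⟪γ • Q z - B z, x (n + 1) - z⟫ 0) (fun _ => 0)
      (4 * (β - κ) / (1 + 3 * β)) (by positivity) (fun _ => by positivity) hapos ha0 hasum
      (by simpa using ((tendsto_add_atTop_iff_nat 1).2 hlimsup).const_mul 4)
      (fun _ => le_rfl) summable_zero ?_
    filter_upwards [eventually_ge_atTop N] with n hn
    obtain ⟨s1, s2⟩ := hshr n hn
    set u := ‖x n - z‖
    set u' := ‖x (n + 1) - z‖
    set s := max ⟪γ • Q z - B z, x (n + 1) - z⟫ 0
    have hu' : 0 ≤ u' := norm_nonneg _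
    have e : u' ^ 2 = a n * ⟪γ • Q (x n) - γ • Q z, x (n + 1) - z⟫
        + a n * ⟪γ • Q z - B z, x (n + 1) - z⟫
        + ⟪(S (y n) - z) - a n • B (S (y n) - z), x (n + 1) - z⟫ := by
      rw [← real_inner_smul_left, ← real_inner_smul_left, ← inner_add_left, ← inner_add_left,
        ← hsplit n, real_inner_self_eq_norm_sq]
    have n1 := mul_le_mul_of_nonneg_left ((real_inner_le_norm (γ • Q (x n) - γ • Q z)
      (x (n + 1) - z)).trans (mul_le_mul_of_nonneg_right (hQγ (x n) z) hu')) (hapos n)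
    have n2 : a n * ⟪γ • Q z - B z, x (n + 1) - z⟫ ≤ a n * s :=
      mul_le_mul_of_nonneg_left (le_max_left _ _) (hapos n)
    have n3 := (real_inner_le_norm ((S (y n) - z) - a n • B (S (y n) - z))
      (x (n + 1) - z)).trans (mul_le_mul_of_nonneg_right ((s2 (S (y n) - z)).trans
        (mul_le_mul_of_nonneg_left (hSyz n) (sub_nonneg.2 s1))) hu')
    -- Young's inequality for the mixed terms `u * u'`
    have n4 : 0 ≤ ((1 - a n * β) / 2 + a n * κ) * (u - u') ^ 2 := by
      have := mul_nonneg (hapos n) hκ.le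
      exact mul_nonneg (by linarith) (sq_nonneg _)
    have hθ : 0 ≤ 3 * (a n * β) - 2 * (a n * κ) := by
      have := mul_nonneg (hapos n) hδ.le
      have := mul_nonneg (hapos n) hβ.le
      linarith
    have hs0 : 0 ≤ s := le_max_right _ _
    have key := div_step (v := u ^ 2) (v' := u' ^ 2) (θ := 3 * (a n * β) - 2 * (a n * κ))
      (m := 4 * a n * (β - κ)) (D := 3 * β) (r := 4 * a n * s) hθ
      (by nlinarith [hale n, hapos n, mul_nonneg (hapos n) hκ.le])
      (mul_nonneg (by linarith [hapos n]) hδ.le) (sq_nonneg _)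
      (mul_nonneg (by linarith [hapos n]) hs0) (by nlinarith)
    refine key.trans_eq ?_
    ring
  rw [tendsto_iff_norm_sub_tendsto_zero]
  simpa [Real.sqrt_sq] using hsq.sqrt
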